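/- For every natural number n ≥ 1 and every partition P of [ω]^n (P may be infinite), there exists a finite partition Q of [ω]^{2n} such that every set X ⊆ ℕ that is homogeneous for Q is a finite union of sets each of which is canonical for P. -/

import Mathlib

/-! Common definitions. -/

/-- The `i`-th smallest element of a finite set of naturals (default 0 if `i ≥ |s|`). -/
def nth (s : Finset ℕ) (i : ℕ) : ℕ := (s.sort (· ≤ ·)).getD i 0

/-- `[ω]^n` : the set of `n`-element subsets of `ℕ` (as `Finset`s). -/
def cube (n : ℕ) : Set (Finset ℕ) := {s | s.card = n}

/-- `P` is a partition of `Z` (one member may be empty). -/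
def IsPartitionOn (Z : Set (Finset ℕ)) (P : Set (Set (Finset ℕ))) : Prop :=
  ⋃₀ P = Z ∧ ∀ A ∈ P, ∀ B ∈ P, A ∩ B = ∅ ∨ A = B

/-- The equivalence relation `≈_P` induced by a partition `P`. -/
def EquivP (P : Set (Set (Finset ℕ))) (p q : Finset ℕ) : Prop := ∃ A ∈ P, p ∈ A ∧ q ∈ A

/-- `X` is `I`-canonical for a partition `P` of `[ω]^n`. -/
def ICanon (n : ℕ) (P : Set (Set (Finset ℕ))) (I : Set ℕ) (X : Set ℕ) : Prop :=
  ∀ p q : Finset ℕ, ↑p ⊆ X → p.card = n → ↑q ⊆ X → q.card = n →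
    (EquivP P p q ↔ ∀ i ∈ I, nth p i = nth q i)

/-- `X` is canonical for a partition `P` of `[ω]^n`. -/
def Canon (n : ℕ) (P : Set (Set (Finset ℕ))) (X : Set ℕ) : Prop :=
  ∃ I : Set ℕ, I ⊆ Set.Iio n ∧ ICanon n P I X

/-- `X` is homogeneous for a partition `P` of `[ω]^n`. -/
def Homog (n : ℕ) (P : Set (Set (Finset ℕ))) (X : Set ℕ) : Prop :=
  ∃ A ∈ P, ∀ s : Finset ℕ, ↑s ⊆ X → s.card = n → s ∈ A

/-- `[2n]^n` : the `n`-element subsets of `{0, …, 2n-1}`. -/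
def idx (n : ℕ) : Finset (Finset ℕ) := Finset.powersetCard n (Finset.range (2 * n))

/-- The set `Q_{pq} = { z ∈ [ω]^{2n} : {z_[i] : i ∈ p} ≈_P {z_[i] : i ∈ q} }`. -/
def Qpq (n : ℕ) (P : Set (Set (Finset ℕ))) (p q : Finset ℕ) : Set (Finset ℕ) :=
  {z | z.card = 2 * n ∧ EquivP P (p.image (nth z)) (q.image (nth z))}

/-- `P*` : the atoms of the field of subsets of `[ω]^{2n}` generated by the sets `Q_{pq}`. -/
def Atoms (n : ℕ) (P : Set (Set (Finset ℕ))) : Set (Set (Finset ℕ)) :=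
  {Q | Q.Nonempty ∧ ∃ S : Finset ℕ → Finset ℕ → Set (Finset ℕ),
    (∀ p ∈ idx n, ∀ q ∈ idx n, S p q = Qpq n P p q ∨ S p q = cube (2 * n) \ Qpq n P p q) ∧
    Q = ⋂ p ∈ idx n, ⋂ q ∈ idx n, S p q}

/-- `I_{pq} = { i < n : p_[i] = q_[i] }`. -/
def Ipq (n : ℕ) (p q : Finset ℕ) : Set ℕ := {i | i < n ∧ nth p i = nth q i}

/-- `I(Q) = ⋂ { I_{pq} : p, q ∈ [2n]^n, Q ⊆ Q_{pq} }`. -/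
def IofQ (n : ℕ) (P : Set (Set (Finset ℕ))) (Q : Set (Finset ℕ)) : Set ℕ :=
  ⋂ p ∈ idx n, ⋂ q ∈ idx n, ⋂ (_ : Q ⊆ Qpq n P p q), Ipq n p q

/-- `ρ(a,b) = |(a △ b) ∩ X|`, identifying `a` with `{0, …, a-1}`. -/
noncomputable def rho (X : Set ℕ) (a b : ℕ) : ℕ := (X ∩ Set.Ico (min a b) (max a b)).ncard

/-- The sparsity `d(x) = min { ρ(a,b) : a, b ∈ x ∪ {e}, a ≠ b }` (with `d(∅) = ⊤ = ω`). -/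
noncomputable def sparsity (X : Set ℕ) (e : ℕ) (x : Finset ℕ) : ℕ∞ :=
  ⨅ a ∈ (x ∪ {e} : Finset ℕ), ⨅ b ∈ (x ∪ {e} : Finset ℕ), ⨅ _ : a ≠ b, (rho X a b : ℕ∞)

/-- `r(x,y) = max_{b ∈ y} min { ρ(a,b) : a ∈ x ∪ {e}, a ≤ b }`. -/
noncomputable def rfun (X : Set ℕ) (e : ℕ) (x y : Finset ℕ) : ℕ :=
  y.sup fun b => sInf ((fun a => rho X a b) '' {a : ℕ | a ∈ (x ∪ {e} : Finset ℕ) ∧ a ≤ b})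

/-- `x →_{pq} y` : there is `z ∈ [X]^{2n}` with `{z_[i] : i ∈ p} = x` and `{z_[i] : i ∈ q} = y`. -/
def Arrow (X : Set ℕ) (n : ℕ) (p q x y : Finset ℕ) : Prop :=
  ∃ z : Finset ℕ, ↑z ⊆ X ∧ z.card = 2 * n ∧ p.image (nth z) = x ∧ q.image (nth z) = y

/-- `x ↔_Q y` : `x →_{pq} y` for some `p, q ∈ [2n]^n` with `Q ⊆ Q_{pq}`. -/
def RelQ (n : ℕ) (P : Set (Set (Finset ℕ))) (Q : Set (Finset ℕ)) (X : Set ℕ)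
    (x y : Finset ℕ) : Prop :=
  ∃ p ∈ idx n, ∃ q ∈ idx n, Q ⊆ Qpq n P p q ∧ Arrow X n p q x y

/-- `x_0, …, x_l` is a `t`-cascade. -/
def IsCascade (n : ℕ) (P : Set (Set (Finset ℕ))) (Q : Set (Finset ℕ)) (X : Set ℕ) (e : ℕ)
    (t l : ℕ) (x : ℕ → Finset ℕ) : Prop :=
  (∀ i ≤ l, ↑(x i) ⊆ X \ {e} ∧ (x i).card = n) ∧
  ∀ i < l, ((n ^ (t - 2 * i) : ℕ) : ℕ∞) ≤ sparsity X e (x i) ∧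
    rfun X e (x i) (x (i + 1)) ≤ n ^ (t - 2 * i - 1) ∧
    RelQ n P Q X (x i) (x (i + 1))

/-- The `n`-fold Fubini power `u ⊗ ⋯ ⊗ u` of an ultrafilter on `ℕ`, as an
ultrafilter on `Fin n → ℕ`. -/
noncomputable def tensorPow (u : Ultrafilter ℕ) : (n : ℕ) → Ultrafilter (Fin n → ℕ)
  | 0 => pure (fun i => i.elim0)
  | n + 1 => u.bind fun a => (tensorPow u n).map (Fin.cons a)

/-- The diagonal ultrafilter extension `f̃(u, u, …, u)` of `f : ℕ^n → ℕ`. -/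
noncomputable def diagExt {n : ℕ} (f : (Fin n → ℕ) → ℕ) (u : Ultrafilter ℕ) : Ultrafilter ℕ :=
  (tensorPow u n).map f

/-- The Rudin–Keisler preorder. -/
def RKle (u v : Ultrafilter ℕ) : Prop := ∃ h : ℕ → ℕ, v.map h = u

/-- Rudin–Keisler equivalence. -/
def RKeq (u v : Ultrafilter ℕ) : Prop := RKle u v ∧ RKle v u

/-- `u` is nonprincipal: it contains no finite set. -/
def Nonprincipal (u : Ultrafilter ℕ) : Prop := ∀ S : Set ℕ, S.Finite → S ∉ u

/-- `u` is a Ramsey ultrafilter. -/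
def IsRamseyU (u : Ultrafilter ℕ) : Prop :=
  Nonprincipal u ∧ ∀ n : ℕ, 1 ≤ n → ∀ P : Set (Set (Finset ℕ)),
    IsPartitionOn (cube n) P → P.Finite → ∃ X ∈ u, Homog n P X

/-- `f : ℕ^n → ℕ` is selectively upward injective on `X` w.r.t. the index set `I`
(`I = ∅` gives "upward constant"). -/
def SelUpInjWrt (n : ℕ) (f : (Fin n → ℕ) → ℕ) (X : Set ℕ) (I : Set (Fin n)) : Prop :=
  ∀ x y : Fin n → ℕ, (∀ i, x i ∈ X) → (∀ i, y i ∈ X) → StrictMono x → StrictMono y →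
    (f x = f y ↔ ∀ i ∈ I, x i = y i)

/-!
Erdős–Rado canonization with `2n`-element sets. Colour a `2n`-set `z` by the pairs `p, q` of
`n`-subsets of its index set for which `z ∈ Qpq n P p q`. If `X` is infinite and homogeneous for
this finite colouring, then whether two `n`-subsets of `X` are `P`-equivalent depends only on how
their elements interleave, because two `n`-sets together have at most `2n` elements.

An equivalence relation on increasing tuples with this invariance is canonical. Call a coordinate
movable if changing it alone can preserve the class; by invariance, changing it alone then always
preserves the class. If `a` and `b` are equivalent and `i` is the last coordinate where they differ,
say with `a i < b i`, then `i` is movable: after spreading the entries out, `b i` can be moved up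
into the gap just above it without affecting the order type relative to `a`. Copying `b i` into `a`
therefore preserves the class and leaves fewer differences, and by induction two tuples are
equivalent exactly when they agree at every coordinate that is not movable.
-/

theorem exists_ne_and_forall_lt_eq {ι β : Type*} [Preorder ι] [Finite ι] {a b : ι → β}
    (hab : a ≠ b) : ∃ i, a i ≠ b i ∧ ∀ j, i < j → a j = b j := by
  obtain ⟨i, hi, hmax⟩ :=
    (Set.toFinite {i | a i ≠ b i}).exists_maximal (Function.ne_iff.1 hab)
  exact ⟨i, hi, fun j hij => not_not.1 fun hj => (hmax hj hij.le).not_gt hij⟩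

theorem hammingDist_lt_of_eq_off {ι β : Type*} [Fintype ι] [DecidableEq β] {a b c : ι → β} {i : ι}
    (hab : a i ≠ b i) (hcb : c i = b i) (hca : ∀ j, j ≠ i → c j = a j) :
    hammingDist c b < hammingDist a b := by
  refine Finset.card_lt_card <| (Finset.ssubset_iff_of_subset fun j hj => ?_).2
    ⟨i, by simpa using hab, by simpa using hcb⟩
  have hji : j ≠ i := by
    rintro rfl
    simp [hcb] at hj
  simpa [← hca j hji] using hj

theorem cmp_toLex_mk {α β : Type*} [LinearOrder α] [LinearOrder β] {x y : α} {s t : β}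
    (h : x = y → s = t) :
    cmp (toLex (x, s)) (toLex (y, t)) = cmp x y := by
  rcases lt_trichotomy x y with hlt | rfl | hgt
  · rw [hlt.cmp_eq_lt, (Prod.Lex.toLex_lt_toLex.2 (.inl hlt)).cmp_eq_lt]
  · rw [h rfl, cmp_self_eq_eq, cmp_self_eq_eq]
  · rw [hgt.cmp_eq_gt, (Prod.Lex.toLex_lt_toLex.2 (.inl hgt)).cmp_eq_gt]

section OrderInvariant

variable {ι α : Type*} [LinearOrder ι] [LinearOrder α]

/-- An equivalence relation on increasing `ι`-tuples is order invariant if the equivalence of `a`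
and `b` depends only on the relative order of their entries. -/
def OrderInvariant (r : Setoid (ι ↪o α)) : Prop :=
  ∀ a b a' b' : ι ↪o α, (∀ i j, cmp (a i) (b j) = cmp (a' i) (b' j)) → r a b → r a' b'

/-- A coordinate is movable for `r` if some `r`-class contains two tuples which differ exactly
there. For order invariant `r` the coordinates which are not movable form the set `I` for which
`r` is `I`-canonical. -/
def Movable (r : Setoid (ι ↪o α)) (i : ι) : Prop :=
  ∃ a b : ι ↪o α, r a b ∧ a i < b i ∧ ∀ j, j ≠ i → a j = b j

theorem cmp_eq_ite_of_eq_off {a b : ι ↪o α} {i : ι} (hi : a i < b i) (hab : ∀ j, j ≠ i → a j = b j)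
    (j k : ι) : cmp (a j) (b k) = if j = i ∧ k = i then .lt else cmp j k := by
  split_ifs with h
  · obtain ⟨rfl, rfl⟩ := h
    exact (cmp_eq_lt_iff _ _).2 hi
  · by_cases hj : j = i
    · have hk : k ≠ i := fun hk => h ⟨hj, hk⟩
      rw [← hab k hk, a.strictMono.cmp_map_eq]
    · rw [hab j hj, b.strictMono.cmp_map_eq]

theorem OrderInvariant.rel_of_movable {r : Setoid (ι ↪o α)} (hr : OrderInvariant r) {i : ι}
    (hi : Movable r i) {a b : ι ↪o α} (hab : ∀ j, j ≠ i → a j = b j) : r a b := by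
  obtain ⟨a₀, b₀, hr₀, hlt₀, hab₀⟩ := hi
  have rel_of_lt {a b : ι ↪o α} (hlt : a i < b i) (hab : ∀ j, j ≠ i → a j = b j) : r a b :=
    hr a₀ b₀ a b
      (fun j k => by rw [cmp_eq_ite_of_eq_off hlt₀ hab₀, cmp_eq_ite_of_eq_off hlt hab]) hr₀
  rcases lt_trichotomy (a i) (b i) with hlt | heq | hgt
  · exact rel_of_lt hlt hab
  · have : a = b := by
      ext j
      by_cases hj : j = i
      · rw [hj, heq]
      · exact hab j hj
    exact this ▸ r.refl a
  · exact r.symm (rel_of_lt hgt fun j hj => (hab j hj).symm)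

theorem exists_orderEmbedding_raise {a b : ι ↪o α} {i : ι} (hi : a i < b i)
    (hab : ∀ j, i < j → a j = b j) : ∃ c : ι ↪o α, c i = b i ∧ ∀ j, j ≠ i → c j = a j := by
  have hmono : StrictMono (Function.update a i (b i)) := by
    intro j k hjk
    rcases eq_or_ne j i with rfl | hj
    · simpa [hjk.ne', hab k hjk] using hjk
    rcases eq_or_ne k i with rfl | hk
    · simpa [hj] using (a.strictMono hjk).trans hi
    · simpa [hj, hk] using hjk
  exact ⟨.ofStrictMono _ hmono, by simp, fun j hj => by simp [hj]⟩

theorem exists_cmp_eq_and_raise [Finite ι] [Infinite α] {a b : ι ↪o α} {i : ι}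
    (hab : ∀ j, a j ≠ b i) :
    ∃ a' b' c' : ι ↪o α, (∀ j k, cmp (a j) (b k) = cmp (a' j) (b' k)) ∧
      (∀ j k, cmp (a j) (b k) = cmp (a' j) (c' k)) ∧ b' i < c' i ∧ ∀ j, j ≠ i → b' j = c' j := by
  let S : Set α := Set.range a ∪ Set.range b
  have ha (j : ι) : a j ∈ S := .inl ⟨j, rfl⟩
  have hb (j : ι) : b j ∈ S := .inr ⟨j, rfl⟩
  have : Finite (S ×ₗ Bool) := inferInstanceAs (Finite (S × Bool))
  -- The second factor provides a free point immediately above every entry of `a` and `b`.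
  obtain ⟨φ⟩ := nonempty_orderEmbedding_of_finite_infinite (S ×ₗ Bool) α
  have exists_lift (c : ι ↪o α) (hc : ∀ j, c j ∈ S) (s : ι → Bool) :
      ∃ c' : ι ↪o α, ∀ j, c' j = φ (toLex (⟨c j, hc j⟩, s j)) :=
    ⟨.ofStrictMono _ fun j k hjk => φ.strictMono <|
      Prod.Lex.toLex_lt_toLex.2 (.inl (c.strictMono hjk)), fun _ => rfl⟩
  obtain ⟨a', ha'⟩ := exists_lift a ha fun _ => false
  obtain ⟨b', hb'⟩ := exists_lift b hb fun _ => false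
  obtain ⟨c', hc'⟩ := exists_lift b hb fun j => decide (j = i)
  refine ⟨a', b', c', fun j k => ?_, fun j k => ?_, ?_, fun j hj => ?_⟩
  · rw [ha', hb', φ.strictMono.cmp_map_eq, cmp_toLex_mk fun _ => rfl]
    rfl
  · have hk : (⟨a j, ha j⟩ : S) = ⟨b k, hb k⟩ → false = decide (k = i) := fun h => by
      have : k ≠ i := by
        rintro rfl
        exact hab j (congrArg Subtype.val h)
      simp [this]
    rw [ha', hc', φ.strictMono.cmp_map_eq, cmp_toLex_mk hk]
    rfl
  · simp [hb', hc', Prod.Lex.toLex_lt_toLex]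
  · simp [hb', hc', hj]

theorem OrderInvariant.movable_of_last_ne [Finite ι] [Infinite α] {r : Setoid (ι ↪o α)}
    (hr : OrderInvariant r) {a b : ι ↪o α} (hrab : r a b) {i : ι} (hi : a i < b i)
    (hab : ∀ j, i < j → a j = b j) : Movable r i := by
  have a_ne (j : ι) : a j ≠ b i := by
    rcases le_or_gt j i with hj | hj
    · exact ((a.monotone hj).trans_lt hi).ne
    · exact hab j hj ▸ (b.strictMono hj).ne'
  obtain ⟨a', b', c', hb', hc', hlt, heq⟩ := exists_cmp_eq_and_raise a_ne
  exact ⟨b', c', r.trans (r.symm (hr a b a' b' hb' hrab)) (hr a b a' c' hc' hrab), hlt, heq⟩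

theorem OrderInvariant.rel_iff_forall_not_movable [Finite ι] [Infinite α] {r : Setoid (ι ↪o α)}
    (hr : OrderInvariant r) (a b : ι ↪o α) : r a b ↔ ∀ i, ¬ Movable r i → a i = b i := by
  have := Fintype.ofFinite ι
  induction hd : hammingDist a b using Nat.strong_induction_on generalizing a b with
  | _ d ih =>
  subst hd
  rcases eq_or_ne a b with rfl | hne
  · exact iff_of_true (r.refl a) fun _ _ => rfl
  obtain ⟨i, hi, hlast⟩ := exists_ne_and_forall_lt_eq (DFunLike.coe_injective.ne hne)
  wlog hlt : a i < b i generalizing a b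
  · rw [hammingDist_comm] at ih
    have hba := this b a ih hne.symm hi.symm (fun j hj => (hlast j hj).symm)
      (hi.lt_or_gt.resolve_left hlt)
    exact r.comm'.trans (hba.trans (by simp only [eq_comm]))
  by_cases hmov : Movable r i
  · obtain ⟨c, hci, hca⟩ := exists_orderEmbedding_raise hlt hlast
    have hrac : r a c := hr.rel_of_movable hmov fun j hj => (hca j hj).symm
    have hdist := hammingDist_lt_of_eq_off hi hci hca
    calc r a b ↔ r c b := ⟨r.trans (r.symm hrac), r.trans hrac⟩
      _ ↔ ∀ j, ¬ Movable r j → c j = b j := ih _ hdist c b rfl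
      _ ↔ ∀ j, ¬ Movable r j → a j = b j := forall₂_congr fun j hj => by
        rw [hca j (by rintro rfl; exact hj hmov)]
  · exact iff_of_false (fun hrab => hmov (hr.movable_of_last_ne hrab hlt hlast))
      fun h => hi (h i hmov)

end OrderInvariant

section OrderType

theorem exists_common_factor_of_cmp_eq {κ α β : Type*} [Fintype κ] [LinearOrder α] [LinearOrder β]
    {g : κ → α} {g' : κ → β} (h : ∀ x y, cmp (g x) (g y) = cmp (g' x) (g' y)) :
    ∃ k ≤ Fintype.card κ, ∃ (s : κ → Fin k) (w : Fin k ↪o α) (w' : Fin k ↪o β),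
      g = w ∘ s ∧ g' = w' ∘ s := by
  let U : Finset α := Finset.univ.image g
  let w : Fin U.card ↪o α := U.orderEmbOfFin rfl
  have exists_rank (x : κ) : ∃ i, w i = g x := by
    rw [← Set.mem_range, Finset.range_orderEmbOfFin]
    exact Finset.mem_image_of_mem g (Finset.mem_univ x)
  have exists_preimage (i : Fin U.card) : ∃ x, g x = w i := by
    simpa only [U, Finset.mem_image, Finset.mem_univ, true_and] using U.orderEmbOfFin_mem rfl i
  choose s hs using exists_rank
  choose τ hτ using exists_preimage
  have hw' : StrictMono (g' ∘ τ) := fun i j hij =>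
    (lt_iff_lt_of_cmp_eq_cmp (h _ _)).1 (by simpa only [hτ] using w.strictMono hij)
  refine ⟨U.card, Finset.card_image_le, s, w, .ofStrictMono _ hw',
    funext fun x => (hs x).symm, funext fun x => ?_⟩
  exact (eq_iff_eq_of_cmp_eq_cmp (h _ _)).1 ((hs x).symm.trans (hτ (s x)).symm)

theorem exists_orderEmbedding_extend {k : ℕ} (w : Fin k ↪o ℕ) :
    ∃ v : ℕ ↪o ℕ, ∀ i : Fin k, v i = w i := by
  let M := Finset.univ.sup w
  have hM (i : Fin k) : w i ≤ M := Finset.le_sup (f := w) (Finset.mem_univ i)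
  let v (i : ℕ) : ℕ := if h : i < k then w ⟨i, h⟩ else M + 1 + i
  have hv : StrictMono v := by
    intro i j hij
    by_cases hj : j < k
    · simpa [v, hj, hij.trans hj] using hij
    · by_cases hi : i < k
      · have := hM ⟨i, hi⟩
        simp only [v, hi, hj, dite_true, dite_false]
        omega
      · simpa [v, hi, hj] using hij
  exact ⟨.ofStrictMono v hv, fun i => by simp [v]⟩

theorem exists_common_pattern {n : ℕ} {a b a' b' : Fin n ↪o ℕ}
    (h : ∀ i j, cmp (a i) (b j) = cmp (a' i) (b' j)) :
    ∃ (s t : Fin n ↪o Fin (2 * n)) (w w' : Fin (2 * n) ↪o ℕ),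
      a = s.trans w ∧ b = t.trans w ∧ a' = s.trans w' ∧ b' = t.trans w' := by
  have hcmp (x y : Fin n ⊕ Fin n) : cmp (Sum.elim a b x) (Sum.elim a b y) =
      cmp (Sum.elim a' b' x) (Sum.elim a' b' y) := by
    rcases x with i | i <;> rcases y with j | j
    · simp [a.strictMono.cmp_map_eq, a'.strictMono.cmp_map_eq]
    · exact h i j
    · exact cmp_eq_cmp_symm.1 (h j i)
    · simp [b.strictMono.cmp_map_eq, b'.strictMono.cmp_map_eq]
  obtain ⟨k, hk, s, w, w', hs, hs'⟩ := exists_common_factor_of_cmp_eq hcmp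
  replace hk : k ≤ 2 * n := by simpa [two_mul] using hk
  obtain ⟨v, hv⟩ := exists_orderEmbedding_extend w
  obtain ⟨v', hv'⟩ := exists_orderEmbedding_extend w'
  have hsa (i : Fin n) : a i = w (s (.inl i)) := congrFun hs (.inl i)
  have hsb (i : Fin n) : b i = w (s (.inr i)) := congrFun hs (.inr i)
  have hsa' (i : Fin n) : a' i = w' (s (.inl i)) := congrFun hs' (.inl i)
  have hsb' (i : Fin n) : b' i = w' (s (.inr i)) := congrFun hs' (.inr i)
  have sl : StrictMono fun i => s (.inl i) := fun i j hij =>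
    w.lt_iff_lt.1 (by simpa only [← hsa] using a.strictMono hij)
  have sr : StrictMono fun i => s (.inr i) := fun i j hij =>
    w.lt_iff_lt.1 (by simpa only [← hsb] using b.strictMono hij)
  refine ⟨(OrderEmbedding.ofStrictMono _ sl).trans (Fin.castLEOrderEmb hk),
    (OrderEmbedding.ofStrictMono _ sr).trans (Fin.castLEOrderEmb hk),
    Fin.valOrderEmb _ |>.trans v, Fin.valOrderEmb _ |>.trans v', ?_, ?_, ?_, ?_⟩ <;>
  · ext i
    simp [hv, hv', hsa, hsb, hsa', hsb']

theorem orderInvariant_of_forall_pattern {n : ℕ} {r : Setoid (Fin n ↪o ℕ)}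
    (h : ∀ (s t : Fin n ↪o Fin (2 * n)) (w w' : Fin (2 * n) ↪o ℕ),
      r (s.trans w) (t.trans w) → r (s.trans w') (t.trans w')) : OrderInvariant r := by
  intro a b a' b' hcmp
  obtain ⟨s, t, w, w', rfl, rfl, rfl, rfl⟩ := exists_common_pattern hcmp
  exact h s t w w'

end OrderType

section RangeFinset

variable {n m : ℕ}

/-- The `n`-element set of entries of an increasing `n`-tuple; this identifies `Fin n ↪o ℕ`
with `[ω]^n`. -/
def rangeFinset (a : Fin n ↪o ℕ) : Finset ℕ := Finset.univ.map a.toEmbedding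

theorem card_rangeFinset (a : Fin n ↪o ℕ) : (rangeFinset a).card = n := by
  simp [rangeFinset]

theorem coe_rangeFinset (a : Fin n ↪o ℕ) : (rangeFinset a : Set ℕ) = Set.range a := by
  simp [rangeFinset]

theorem nth_rangeFinset (a : Fin n ↪o ℕ) (i : Fin n) : nth (rangeFinset a) i = a i := by
  have ha : a = (rangeFinset a).orderEmbOfFin (card_rangeFinset a) :=
    Finset.orderEmbOfFin_unique' _ fun j => by simp [rangeFinset]
  conv_rhs => rw [ha, Finset.orderEmbOfFin_apply]
  exact List.getD_eq_getElem _ _ _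

theorem exists_rangeFinset_trans {e : ℕ ↪o ℕ} {p : Finset ℕ} (hp : (p : Set ℕ) ⊆ Set.range e)
    (hc : p.card = n) : ∃ a : Fin n ↪o ℕ, rangeFinset (a.trans e) = p := by
  choose a ha using fun i => hp (p.orderEmbOfFin_mem hc i)
  have hmono : StrictMono a := fun i j hij =>
    e.lt_iff_lt.1 (by simpa only [ha] using (p.orderEmbOfFin hc).strictMono hij)
  refine ⟨.ofStrictMono a hmono, ?_⟩
  rw [← p.map_orderEmbOfFin_univ hc, rangeFinset]
  congr 1
  ext i
  exact ha i

theorem image_nth_rangeFinset (s : Fin n ↪o Fin m) (w : Fin m ↪o ℕ) :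
    (rangeFinset (s.trans (Fin.valOrderEmb m))).image (nth (rangeFinset w)) =
      rangeFinset (s.trans w) := by
  ext x
  simp [rangeFinset, ← nth_rangeFinset w]

theorem rangeFinset_mem_idx (s : Fin n ↪o Fin (2 * n)) :
    rangeFinset (s.trans (Fin.valOrderEmb _)) ∈ idx n := by
  refine Finset.mem_powersetCard.2 ⟨fun x hx => ?_, card_rangeFinset _⟩
  obtain ⟨i, rfl⟩ : ∃ i, (s i : ℕ) = x := by simpa [rangeFinset] using hx
  exact Finset.mem_range.2 (s i).isLt

end RangeFinset

section Partition

variable {Z : Set (Finset ℕ)} {P : Set (Set (Finset ℕ))} {n : ℕ}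

theorem EquivP.symm {p q : Finset ℕ} : EquivP P p q → EquivP P q p :=
  fun ⟨A, hA, hp, hq⟩ => ⟨A, hA, hq, hp⟩

theorem IsPartitionOn.equivP_refl (hP : IsPartitionOn Z P) {p : Finset ℕ} (hp : p ∈ Z) :
    EquivP P p p := by
  obtain ⟨A, hA, hpA⟩ := Set.mem_sUnion.1 (hP.1 ▸ hp)
  exact ⟨A, hA, hpA, hpA⟩

theorem IsPartitionOn.equivP_trans (hP : IsPartitionOn Z P) {p q s : Finset ℕ} :
    EquivP P p q → EquivP P q s → EquivP P p s := by
  rintro ⟨A, hA, hpA, hqA⟩ ⟨B, hB, hqB, hsB⟩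
  obtain rfl : A = B :=
    (hP.2 A hA B hB).resolve_left (Set.Nonempty.ne_empty ⟨q, hqA, hqB⟩)
  exact ⟨A, hA, hpA, hsB⟩

/-- The relation `≈_P` on the `n`-subsets of the range of `e`, read on increasing `n`-tuples
of indices. -/
def tupleSetoid (hP : IsPartitionOn (cube n) P) (e : ℕ ↪o ℕ) : Setoid (Fin n ↪o ℕ) where
  r a b := EquivP P (rangeFinset (a.trans e)) (rangeFinset (b.trans e))
  iseqv := ⟨fun _ => hP.equivP_refl (card_rangeFinset _), EquivP.symm, hP.equivP_trans⟩

theorem exists_finite_partition_forall_homog_eq {κ : Type*} [Finite κ] (m : ℕ)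
    (c : Finset ℕ → κ) :
    ∃ Q : Set (Set (Finset ℕ)), IsPartitionOn (cube m) Q ∧ Q.Finite ∧
      ∀ X : Set ℕ, Homog m Q X → ∀ z z' : Finset ℕ, ↑z ⊆ X → z.card = m → ↑z' ⊆ X →
        z'.card = m → c z = c z' := by
  refine ⟨Set.range fun t => {z ∈ cube m | c z = t}, ⟨?_, ?_⟩, Set.finite_range _, ?_⟩
  · ext z
    simp
  · rintro _ ⟨t, rfl⟩ _ ⟨t', rfl⟩
    refine or_iff_not_imp_left.2 fun hne => ?_
    obtain ⟨z, ⟨_, rfl⟩, ⟨_, rfl⟩⟩ := Set.nonempty_iff_ne_empty.2 hne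
    rfl
  · rintro X ⟨_, ⟨t, rfl⟩, hX⟩ z z' hz hzm hz' hzm'
    exact (hX z hz hzm).2.trans (hX z' hz' hzm').2.symm

theorem canon_of_orderInvariant (hP : IsPartitionOn (cube n) P) {e : ℕ ↪o ℕ}
    (hr : OrderInvariant (tupleSetoid hP e)) : Canon n P (Set.range e) := by
  refine ⟨Fin.val '' {i | ¬ Movable (tupleSetoid hP e) i}, ?_, ?_⟩
  · rintro _ ⟨i, _, rfl⟩
    exact i.isLt
  · intro p q hp hpn hq hqn
    obtain ⟨a, rfl⟩ := exists_rangeFinset_trans hp hpn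
    obtain ⟨b, rfl⟩ := exists_rangeFinset_trans hq hqn
    refine (hr.rel_iff_forall_not_movable a b).trans ?_
    simp [nth_rangeFinset]

theorem canon_of_forall_mem_Qpq (hP : IsPartitionOn (cube n) P) {X : Set ℕ} (hX : X.Infinite)
    (h : ∀ z z' : Finset ℕ, ↑z ⊆ X → z.card = 2 * n → ↑z' ⊆ X → z'.card = 2 * n →
      ∀ p ∈ idx n, ∀ q ∈ idx n, z ∈ Qpq n P p q → z' ∈ Qpq n P p q) : Canon n P X := by
  classical
  have := hX.to_subtype
  obtain ⟨e, rfl⟩ : ∃ e : ℕ ↪o ℕ, Set.range e = X :=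
    ⟨Nat.orderEmbeddingOfSet X, Nat.orderEmbeddingOfSet_range X⟩
  have subset_range (w : Fin (2 * n) ↪o ℕ) :
      (rangeFinset (w.trans e) : Set ℕ) ⊆ Set.range e := by
    rw [coe_rangeFinset]
    exact Set.range_comp_subset_range w e
  have mem_Qpq_iff (s t : Fin n ↪o Fin (2 * n)) (w : Fin (2 * n) ↪o ℕ) :
      rangeFinset (w.trans e) ∈ Qpq n P (rangeFinset (s.trans (Fin.valOrderEmb _)))
        (rangeFinset (t.trans (Fin.valOrderEmb _))) ↔
      tupleSetoid hP e (s.trans w) (t.trans w) := by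
    rw [Qpq, Set.mem_ofPred_eq, image_nth_rangeFinset, image_nth_rangeFinset]
    exact and_iff_right (card_rangeFinset _)
  refine canon_of_orderInvariant hP (orderInvariant_of_forall_pattern fun s t w w' => ?_)
  rw [← mem_Qpq_iff, ← mem_Qpq_iff]
  exact h _ _ (subset_range w) (card_rangeFinset _) (subset_range w') (card_rangeFinset _)
    _ (rangeFinset_mem_idx s) _ (rangeFinset_mem_idx t)

theorem canon_of_subsingleton (hP : IsPartitionOn (cube n) P) {X : Set ℕ}
    (hX : X.Subsingleton) : Canon n P X := by
  refine ⟨∅, Set.empty_subset _, fun p q hp hpn hq hqn => ?_⟩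
  obtain rfl : p = q := by
    refine Finset.eq_of_subset_of_card_le (fun x hx => ?_) (hqn.trans hpn.symm).le
    obtain ⟨y, hy⟩ := Finset.card_pos.1 (hqn ▸ hpn ▸ Finset.card_pos.2 ⟨x, hx⟩)
    exact hX (hq hy) (hp hx) ▸ hy
  simpa using hP.equivP_refl hpn

end Partition

/-- For every `n ≥ 1` and every partition `P` of `[ω]^n`, there is a finite
partition `Q` of `[ω]^{2n}` such that every `X ⊆ ℕ` homogeneous for `Q` is a finite union
of sets canonical for `P`. -/
theorem stmt_0 (n : ℕ) (hn : 1 ≤ n) (P : Set (Set (Finset ℕ)))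
    (hP : IsPartitionOn (cube n) P) :
    ∃ Q : Set (Set (Finset ℕ)), IsPartitionOn (cube (2 * n)) Q ∧ Q.Finite ∧
      ∀ X : Set ℕ, Homog (2 * n) Q X →
        ∃ (k : ℕ) (R : Fin k → Set ℕ), (∀ j, Canon n P (R j)) ∧ X = ⋃ j, R j := by
  obtain ⟨Q, hQ, hQfin, hhom⟩ := exists_finite_partition_forall_homog_eq (2 * n)
    fun z => {pq : idx n × idx n | z ∈ Qpq n P pq.1 pq.2}
  refine ⟨Q, hQ, hQfin, fun X hX => ?_⟩
  rcases X.finite_or_infinite with hfin | hinf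
  · obtain ⟨k, f, -, rfl⟩ := hfin.fin_param
    exact ⟨k, fun j => {f j}, fun j => canon_of_subsingleton hP Set.subsingleton_singleton,
      (Set.iUnion_singleton_eq_range f).symm⟩
  · refine ⟨1, fun _ => X, fun _ => canon_of_forall_mem_Qpq hP hinf ?_,
      (Set.iUnion_const X).symm⟩
    intro z z' hz hzn hz' hzn' p hp q hq
    exact (Set.ext_iff.1 (hhom X hX z z' hz hzn hz' hzn') (⟨p, hp⟩, ⟨q, hq⟩)).1
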